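/- Fix θ ∈ [0,2π) and a real 2×2 matrix R = (r_{ij}) with det R = 1, and let α, β, γ be built from c := (|r₁₁| + |r₂₂| + 2)/|r₁₂| if r₁₂ ≠ 0 and c := |r₁₁ r₂₁| if r₁₂ = 0. Assume there exists a real-valued absolutely continuous function g on [a,b] with g(a) = g(b) = 0, ∫ₐᵇ p|g'|² < ∞, and g(x)w(x) > 0 a.e. on (a,b), and let ε > 0 satisfy μ_{1/p}({x ∈ [a,b] : p(x)g(x)w(x) < ε}) ≤ 1/(2γ²). Then every λ ∈ ℂ with Im λ ≠ 0 for which there exists a solution (φ, u) of −(pφ')' + qφ = λwφ with φ not identically zero and (φ(b), u(b))ᵀ = e^{iθ} R (φ(a), u(a))ᵀ, satisfies |Im λ| ≤ (2/ε)·β·γ·‖g'‖_{p,2} and |Re λ| ≤ (2/ε)·(β·γ·‖g'‖_{p,2} + (β² + γ²‖q‖_{L¹})·‖g‖_∞). -/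

import Mathlib

open MeasureTheory Real Complex

theorem ac_complex_primitive {a b : ℝ} {f : ℝ → ℂ} (hf : IntervalIntegrable f volume a b) :
    AbsolutelyContinuousOnInterval (fun x => ∫ t in a..x, f t) a b := by
  have hre : IntervalIntegrable (fun t => (f t).re) volume a b := ⟨hf.1.re, hf.2.re⟩
  have him : IntervalIntegrable (fun t => (f t).im) volume a b := ⟨hf.1.im, hf.2.im⟩
  have h1 := hre.absolutelyContinuousOnInterval_intervalIntegral (c := a) (by simp)
  have h2 := him.absolutelyContinuousOnInterval_intervalIntegral (c := a) (by simp)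
  have hc : ∀ z : ℂ, AbsolutelyContinuousOnInterval (fun _ : ℝ => z) a b := fun z =>
    LipschitzOnWith.absolutelyContinuousOnInterval (K := 0)
      ((LipschitzWith.const z).lipschitzOnWith)
  have h3 := (h1.fun_smul (hc 1)).fun_add (h2.fun_smul (hc I))
  rw [absolutelyContinuousOnInterval_iff] at h3 ⊢
  intro ε hε
  obtain ⟨δ, hδ, H⟩ := h3 ε hε
  refine ⟨δ, hδ, fun E hE hs => ?_⟩
  have key : ∀ x ∈ Set.uIcc a b, ∫ t in a..x, f t =
      (∫ t in a..x, (f t).re) • (1:ℂ) + (∫ t in a..x, (f t).im) • I := by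
    intro x hx
    have hfx : IntervalIntegrable f volume a x :=
      hf.mono_set (Set.uIcc_subset_uIcc_left hx)
    have e1 : ∫ t in a..x, (f t).re = (∫ t in a..x, f t).re := by
      simpa using (Complex.reCLM.intervalIntegral_comp_comm hfx)
    have e2 : ∫ t in a..x, (f t).im = (∫ t in a..x, f t).im := by
      simpa using (Complex.imCLM.intervalIntegral_comp_comm hfx)
    rw [e1, e2]
    apply Complex.ext <;> simp
  refine lt_of_le_of_lt (le_of_eq ?_) (H E hE hs)
  refine Finset.sum_congr rfl fun i hi => ?_
  have := hE.1 i hi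
  rw [key _ this.1, key _ this.2]

/-- `f` is a primitive of the integrable function `f'` on `[a,b]`. -/
def AI (a b : ℝ) (f f' : ℝ → ℂ) : Prop :=
  IntervalIntegrable f' volume a b ∧ ∀ x ∈ Set.Icc a b, f x = f a + ∫ t in a..x, f' t

theorem AI.cont {a b : ℝ} (hab : a ≤ b) {f f' : ℝ → ℂ} (h : AI a b f f') :
    ContinuousOn f (Set.Icc a b) := by
  have h1 := intervalIntegral.continuousOn_primitive_interval' h.1 (by simp : a ∈ Set.uIcc a b)
  rw [Set.uIcc_of_le hab] at h1
  exact (continuousOn_const.add h1).congr h.2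

theorem AI.mul {a b : ℝ} (hab : a ≤ b) {f f' g g' : ℝ → ℂ} (hf : AI a b f f') (hg : AI a b g g') :
    AI a b (fun x => f x * g x) (fun x => f' x * g x + f x * g' x) := by
  have hcf := hf.cont hab
  have hcg := hg.cont hab
  have hu : Set.uIcc a b = Set.Icc a b := Set.uIcc_of_le hab
  have hint : IntervalIntegrable (fun x => f' x * g x + f x * g' x) volume a b :=
    (hf.1.mul_continuousOn (by rwa [hu])).add (hg.1.continuousOn_mul (by rwa [hu]))
  refine ⟨hint, ?_⟩
  have hc : ∀ z : ℂ, AbsolutelyContinuousOnInterval (fun _ : ℝ => z) a b := fun z =>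
    LipschitzOnWith.absolutelyContinuousOnInterval (K := 0)
      ((LipschitzWith.const z).lipschitzOnWith)
  have hF := (hc (f a)).fun_add (ac_complex_primitive hf.1)
  have hG := (hc (g a)).fun_add (ac_complex_primitive hg.1)
  have hK := (hF.fun_smul hG).fun_sub (ac_complex_primitive hint)
  have hae : ∀ᵐ x, x ∈ Set.uIcc a b → HasDerivAt (fun x => (f a + ∫ t in a..x, f' t) •
      (g a + ∫ t in a..x, g' t) - ∫ t in a..x, (f' t * g t + f t * g' t)) 0 x := by
    filter_upwards [hf.1.ae_hasDerivAt_integral, hg.1.ae_hasDerivAt_integral,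
      hint.ae_hasDerivAt_integral] with x h1 h2 h3 hx
    have d1 := (h1 hx a (by simp)).const_add (f a)
    have d2 := (h2 hx a (by simp)).const_add (g a)
    have d3 := h3 hx a (by simp)
    have := (d1.fun_mul d2).fun_sub d3
    rw [hu] at hx
    rw [← hf.2 x hx, ← hg.2 x hx] at this
    simpa [smul_eq_mul] using this
  obtain ⟨C, hC⟩ := hK.const_of_ae_hasDerivAt_zero hae
  intro x hx
  have e1 := hC a (by simp)
  have e2 := hC x (by rwa [hu])
  simp only [smul_eq_mul, intervalIntegral.integral_same, add_zero, sub_zero] at e1 e2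
  rw [← hf.2 x hx, ← hg.2 x hx] at e2
  show f x * g x = f a * g a + ∫ t in a..x, (f' t * g t + f t * g' t)
  rw [e1, ← e2]; ring

theorem AI.conj {a b : ℝ} {f f' : ℝ → ℂ} (hf : AI a b f f') :
    AI a b (fun x => starRingEnd ℂ (f x)) (fun x => starRingEnd ℂ (f' x)) := by
  refine ⟨?_, fun x hx => ?_⟩
  · have h := hf.1
    refine ⟨?_, ?_⟩
    · exact (Complex.conjCLE.toContinuousLinearMap.integrable_comp h.1)
    · exact (Complex.conjCLE.toContinuousLinearMap.integrable_comp h.2)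
  · show starRingEnd ℂ (f x) = starRingEnd ℂ (f a) + ∫ t in a..x, starRingEnd ℂ (f' t)
    rw [hf.2 x hx, map_add]
    congr 1
    rw [intervalIntegral.integral_of_le hx.1, intervalIntegral.integral_of_le hx.1,
      integral_conj]

theorem cs_lemma {a b : ℝ} (hab : a ≤ b) {A B C : ℝ → ℝ} (hA : IntervalIntegrable A volume a b)
    (hB : IntervalIntegrable B volume a b) (hC : IntervalIntegrable C volume a b)
    (h : ∀ᵐ x ∂(volume.restrict (Set.Ioc a b)), 0 ≤ A x ∧ 0 ≤ C x ∧ B x ^ 2 ≤ A x * C x) :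
    (∫ t in a..b, B t) ^ 2 ≤ (∫ t in a..b, A t) * ∫ t in a..b, C t := by
  have key : ∀ s : ℝ, 0 ≤ (∫ t in a..b, C t) * (s * s) + (2 * ∫ t in a..b, B t) * s
      + ∫ t in a..b, A t := by
    intro s
    have e : (∫ t in a..b, C t) * (s * s) + (2 * ∫ t in a..b, B t) * s
      + ∫ t in a..b, A t = ∫ t in a..b, (C t * (s * s) + (2 * s) * B t + A t) := by
      rw [intervalIntegral.integral_add ((hC.mul_const _).add (hB.const_mul _)) hA,
        intervalIntegral.integral_add (hC.mul_const _) (hB.const_mul _),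
        intervalIntegral.integral_mul_const, intervalIntegral.integral_const_mul]
      ring
    rw [e]
    apply intervalIntegral.integral_nonneg_of_ae_restrict hab
    rw [Measure.restrict_congr_set Ioc_ae_eq_Icc.symm]
    filter_upwards [h] with x ⟨h1, h2, h3⟩
    simp only [Pi.zero_apply]
    have hs : |B x| ≤ √(A x) * √(C x) := by
      rw [← Real.sqrt_mul h1]; exact Real.abs_le_sqrt h3
    have e1 := Real.sq_sqrt h1
    have e2 := Real.sq_sqrt h2
    have h4 : |s * B x| ≤ |s| * (√(A x) * √(C x)) := by
      rw [abs_mul]; gcongr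
    have h5 := neg_abs_le (s * B x)
    nlinarith [sq_nonneg (|s| * √(C x) - √(A x)), sq_abs s]
  have := discrim_le_zero key
  unfold discrim at this
  nlinarith

theorem weight_lemma {a b : ℝ} (hab : a ≤ b) {p : ℝ → ℝ} {S : Set ℝ} (hS : MeasurableSet S)
    (hp_pos : ∀ᵐ x ∂(volume.restrict (Set.Ioc a b)), 0 < p x)
    (hp_int : IntegrableOn (fun x => 1 / p x) (Set.Ioc a b)) {k : ℝ} (hk : 0 ≤ k)
    (h : (volume.withDensity fun x => ENNReal.ofReal (1 / p x)) S ≤ ENNReal.ofReal k) :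
    ∫ t in a..b, S.indicator (fun x => 1 / p x) t ≤ k := by
  rw [intervalIntegral.integral_of_le hab, integral_eq_lintegral_of_nonneg_ae]
  · apply ENNReal.toReal_le_of_le_ofReal hk
    rw [withDensity_apply _ hS] at h
    refine le_trans ?_ h
    rw [← lintegral_indicator hS]
    refine le_trans (setLIntegral_le_lintegral _ _) (lintegral_mono fun x => ?_)
    by_cases hx : x ∈ S <;> simp [hx]
  · filter_upwards [hp_pos] with x hx
    by_cases hxS : x ∈ S
    · simp [hxS, hx.le]
    · simp [hxS]
  · exact (hp_int.indicator hS).aestronglyMeasurable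

theorem bdry_im (e x y : ℂ) (r11 r12 r21 r22 : ℝ) (hdet : r11 * r22 - r12 * r21 = 1)
    (he : e * starRingEnd ℂ e = 1) :
    (e * ((r21 : ℂ) * x + r22 * y) * starRingEnd ℂ (e * ((r11 : ℂ) * x + r12 * y))).im
      = (y * starRingEnd ℂ x).im := by
  have h1 : e * ((r21 : ℂ) * x + r22 * y) * starRingEnd ℂ (e * ((r11 : ℂ) * x + r12 * y))
      = ((r21 : ℂ) * x + r22 * y) * starRingEnd ℂ ((r11 : ℂ) * x + r12 * y) := by
    rw [map_mul]
    linear_combination ((r21 : ℂ) * x + r22 * y) * starRingEnd ℂ ((r11 : ℂ) * x + r12 * y) * he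
  rw [h1]
  simp
  linear_combination (x.re * y.im - x.im * y.re) * hdet

theorem bdry_bound (e x y : ℂ) (r11 r12 r21 r22 c M2 : ℝ) (hdet : r11 * r22 - r12 * r21 = 1)
    (he : e * starRingEnd ℂ e = 1)
    (hc : c = if r12 = 0 then |r11 * r21| else (|r11| + |r22| + 2) / |r12|)
    (hx : normSq x ≤ M2) (hz : normSq (e * ((r11 : ℂ) * x + r12 * y)) ≤ M2) :
    ‖e * ((r21 : ℂ) * x + r22 * y) * starRingEnd ℂ (e * ((r11 : ℂ) * x + r12 * y))
      - y * starRingEnd ℂ x‖ ≤ c * M2 := by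
  have hdet' : (r11 : ℂ) * r22 - r12 * r21 = 1 := by exact_mod_cast hdet
  by_cases h : r12 = 0
  · rw [if_pos h] at hc
    subst h
    have : e * ((r21 : ℂ) * x + r22 * y) * starRingEnd ℂ (e * ((r11 : ℂ) * x + (0:ℝ) * y))
      - y * starRingEnd ℂ x = ((r11 * r21 * normSq x : ℝ) : ℂ) := by
      push_cast
      rw [normSq_eq_conj_mul_self]
      simp only [map_mul, map_add, Complex.conj_ofReal, Complex.ofReal_zero, map_zero, zero_mul,
        add_zero] at hdet' ⊢
      linear_combination (r21 * x + r22 * y) * r11 * (starRingEnd ℂ x) * he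
        + y * (starRingEnd ℂ x) * hdet'
    rw [this, Complex.norm_real, Real.norm_eq_abs, abs_mul, abs_of_nonneg (normSq_nonneg x), hc]
    gcongr
  · rw [if_neg h] at hc
    have hr : 0 < |r12| := abs_pos.2 h
    rw [hc, div_mul_eq_mul_div, le_div_iff₀ hr]
    set z := e * ((r11 : ℂ) * x + r12 * y) with hzd
    have key : (e * ((r21 : ℂ) * x + r22 * y) * starRingEnd ℂ z - y * starRingEnd ℂ x) * r12
        = r22 * (z * starRingEnd ℂ z) - e * x * starRingEnd ℂ z
          - starRingEnd ℂ e * z * starRingEnd ℂ x + r11 * (x * starRingEnd ℂ x) := by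
      linear_combination (-(e * x * starRingEnd ℂ z)) * hdet'
        + (r11 * x + r12 * y) * (starRingEnd ℂ x) * he + (starRingEnd ℂ e * starRingEnd ℂ x
          - r22 * starRingEnd ℂ z) * hzd
    have hne : ‖e‖ = 1 := by
      have := congrArg (fun t => ‖t‖) he
      simp at this
      nlinarith [norm_nonneg e]
    have hx' : ‖x‖ ^ 2 ≤ M2 := by rwa [← normSq_eq_norm_sq]
    have hz' : ‖z‖ ^ 2 ≤ M2 := by rwa [← normSq_eq_norm_sq]
    have hxz : ‖x‖ * ‖z‖ ≤ M2 := by nlinarith [sq_nonneg (‖x‖ - ‖z‖)]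
    have : ‖(e * ((r21 : ℂ) * x + r22 * y) * starRingEnd ℂ z - y * starRingEnd ℂ x)‖ * |r12|
        ≤ |r22| * ‖z‖ ^ 2 + ‖x‖ * ‖z‖ + ‖x‖ * ‖z‖ + |r11| * ‖x‖ ^ 2 := by
      have e1 : |r12| = ‖(r12 : ℂ)‖ := by simp
      rw [e1, ← norm_mul, key]
      refine (norm_add_le _ _).trans ?_
      refine add_le_add ((norm_sub_le _ _).trans (add_le_add ((norm_sub_le _ _).trans
        (add_le_add ?_ ?_)) ?_)) ?_
      · simp [pow_two]
      · simp [hne]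
      · simp [hne, mul_comm]
      · simp [pow_two]
    refine this.trans ?_
    nlinarith [mul_le_mul_of_nonneg_left hz' (abs_nonneg r22),
      mul_le_mul_of_nonneg_left hx' (abs_nonneg r11)]



set_option maxHeartbeats 2000000 in
/-- Theorem 3.2 of the paper for coupled self-adjoint boundary conditions:
bounds on the real and imaginary parts of non-real eigenvalues of the
indefinite Sturm–Liouville problem. -/
theorem nonreal_eigenvalue_bounds_coupled
    (a b : ℝ) (hab : a < b) (p q w : ℝ → ℝ)
    (hpm : Measurable p) (hqm : Measurable q) (hwm : Measurable w)
    (hp_pos : ∀ᵐ x ∂(volume.restrict (Set.Ioc a b)), 0 < p x)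
    (hp_int : IntegrableOn (fun x => 1 / p x) (Set.Ioc a b))
    (hq_int : IntegrableOn q (Set.Ioc a b))
    (hw_int : IntegrableOn w (Set.Ioc a b))
    (hw_ne : ∀ᵐ x ∂(volume.restrict (Set.Ioc a b)), w x ≠ 0)
    (hw_pos : 0 < volume {x ∈ Set.Ioc a b | 0 < w x})
    (hw_neg : 0 < volume {x ∈ Set.Ioc a b | w x < 0})
    (θ : ℝ) (hθ : θ ∈ Set.Ico 0 (2 * π))
    (r11 r12 r21 r22 : ℝ) (hdet : r11 * r22 - r12 * r21 = 1)
    (c α β γ : ℝ)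
    (hc : c = if r12 = 0 then |r11 * r21| else (|r11| + |r22| + 2) / |r12|)
    (hα : α = c + ∫ t in a..b, |min (q t) 0|)
    (hβ : β = Real.sqrt (α * (1 / (∫ t in a..b, 1 / p t) + α)) + α)
    (hγ : γ = Real.sqrt (2 * β + 1 / (∫ t in a..b, 1 / p t)))
    -- the comparison function g, absolutely continuous with a.e. derivative g'
    (g g' : ℝ → ℝ) (hg'm : Measurable g')
    (hg'int : IntegrableOn g' (Set.Icc a b))
    (hgAC : ∀ x ∈ Set.Icc a b, g x = g a + ∫ t in a..x, g' t)
    (hga : g a = 0) (hgb : g b = 0)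
    (hg'2 : IntegrableOn (fun t => p t * g' t ^ 2) (Set.Ioc a b))
    (hgw : ∀ᵐ x ∂(volume.restrict (Set.Ioc a b)), 0 < g x * w x)
    (ε : ℝ) (hε : 0 < ε)
    (hεcond : (volume.withDensity fun x => ENNReal.ofReal (1 / p x))
        {x | x ∈ Set.Icc a b ∧ p x * g x * w x < ε} ≤ ENNReal.ofReal (1 / (2 * γ ^ 2))) :
    ∀ lam : ℂ, lam.im ≠ 0 →
      ∀ φ u : ℝ → ℂ,
        ContinuousOn φ (Set.Icc a b) → ContinuousOn u (Set.Icc a b) →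
        (∀ x ∈ Set.Icc a b, φ x = φ a + ∫ t in a..x, u t / (p t : ℂ)) →
        (∀ x ∈ Set.Icc a b,
            u x = u a + ∫ t in a..x, ((q t : ℂ) - lam * (w t : ℂ)) * φ t) →
        (∃ x ∈ Set.Icc a b, φ x ≠ 0) →
        φ b = Complex.exp (θ * Complex.I) * ((r11 : ℂ) * φ a + (r12 : ℂ) * u a) →
        u b = Complex.exp (θ * Complex.I) * ((r21 : ℂ) * φ a + (r22 : ℂ) * u a) →
        |lam.im| ≤ 2 / ε * β * γ * Real.sqrt (∫ t in a..b, p t * g' t ^ 2)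
          ∧ |lam.re| ≤ 2 / ε *
              (β * γ * Real.sqrt (∫ t in a..b, p t * g' t ^ 2)
                + (β ^ 2 + γ ^ 2 * ∫ t in a..b, |q t|)
                    * sSup ((fun x => |g x|) '' Set.Icc a b)) := by
  intro lam hlam φ u hφc huc hφ hu hφne hbφ hbu
  have hab' := hab.le
  have huI : Set.uIcc a b = Set.Icc a b := Set.uIcc_of_le hab'
  -- integrability
  have ip : IntervalIntegrable (fun x => 1 / p x) volume a b :=
    (intervalIntegrable_iff_integrableOn_Ioc_of_le hab').2 hp_int
  have iq : IntervalIntegrable q volume a b :=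
    (intervalIntegrable_iff_integrableOn_Ioc_of_le hab').2 hq_int
  have iw : IntervalIntegrable w volume a b :=
    (intervalIntegrable_iff_integrableOn_Ioc_of_le hab').2 hw_int
  have ig' : IntervalIntegrable g' volume a b :=
    (intervalIntegrable_iff_integrableOn_Ioc_of_le hab').2
      (hg'int.mono_set Set.Ioc_subset_Icc_self)
  have ipg : IntervalIntegrable (fun t => p t * g' t ^ 2) volume a b :=
    (intervalIntegrable_iff_integrableOn_Ioc_of_le hab').2 hg'2
  have cI : ∀ {f : ℝ → ℝ}, IntervalIntegrable f volume a b →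
      IntervalIntegrable (fun x => (f x : ℂ)) volume a b := fun h => ⟨h.1.ofReal, h.2.ofReal⟩
  have mulc : ∀ {f h : ℝ → ℝ}, IntervalIntegrable f volume a b → ContinuousOn h (Set.Icc a b) →
      IntervalIntegrable (fun x => f x * h x) volume a b :=
    fun hf hh => hf.mul_continuousOn (by rwa [huI])
  have mulcC : ∀ {f h : ℝ → ℂ}, IntervalIntegrable f volume a b → ContinuousOn h (Set.Icc a b) →
      IntervalIntegrable (fun x => f x * h x) volume a b :=
    fun hf hh => hf.mul_continuousOn (by rwa [huI])
  -- AI facts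
  have Aφ : AI a b φ (fun t => u t / (p t : ℂ)) := by
    refine ⟨?_, hφ⟩
    have := mulcC (cI ip) huc
    refine this.congr (fun x _ => ?_)
    push_cast; ring
  have Au : AI a b u (fun t => ((q t : ℂ) - lam * (w t : ℂ)) * φ t) :=
    ⟨mulcC ((cI iq).sub ((cI iw).const_mul lam)) hφc, hu⟩
  have Ag : AI a b (fun x => (g x : ℂ)) (fun x => (g' x : ℂ)) := by
    refine ⟨cI ig', fun x hx => ?_⟩
    show (g x : ℂ) = (g a : ℂ) + ∫ t in a..x, (g' t : ℂ)
    rw [hgAC x hx, intervalIntegral.integral_ofReal]; push_cast; rfl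
  have gc : ContinuousOn g (Set.Icc a b) := by
    have := Complex.continuous_re.comp_continuousOn (Ag.cont hab')
    simpa [Function.comp_def] using this
  have nc : ContinuousOn (fun x => normSq (φ x)) (Set.Icc a b) :=
    Complex.continuous_normSq.comp_continuousOn hφc
  have mc : ContinuousOn (fun x => normSq (u x)) (Set.Icc a b) :=
    Complex.continuous_normSq.comp_continuousOn huc
  have iN := mulc ip nc
  have iD := mulc ip mc
  have iQ := mulc iq nc
  have iW := mulc iw nc
  set P := ∫ t in a..b, 1 / p t with hP
  set N2 := ∫ t in a..b, 1 / p t * normSq (φ t) with hN2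
  set D2 := ∫ t in a..b, 1 / p t * normSq (u t) with hD2
  set Q := ∫ t in a..b, q t * normSq (φ t) with hQ
  set W := ∫ t in a..b, w t * normSq (φ t) with hW
  set G2 := ∫ t in a..b, p t * g' t ^ 2 with hG2
  have hI : ∀ {f h : ℝ → ℝ}, IntervalIntegrable f volume a b → IntervalIntegrable h volume a b →
      (∀ᵐ x ∂(volume.restrict (Set.Ioc a b)), f x ≤ h x) →
      ∫ t in a..b, f t ≤ ∫ t in a..b, h t := by
    intro f h hf hh hle
    refine intervalIntegral.integral_mono_ae_restrict hab' hf hh ?_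
    rw [Measure.restrict_congr_set Ioc_ae_eq_Icc.symm]
    exact hle
  have hmem : ∀ᵐ x ∂(volume.restrict (Set.Ioc a b)), x ∈ Set.Icc a b := by
    filter_upwards [ae_restrict_mem measurableSet_Ioc] with x hx using Set.Ioc_subset_Icc_self hx
  have hPpos : 0 < P := by
    rw [hP, intervalIntegral.integral_pos_iff_support_of_nonneg_ae' _ ip]
    · refine ⟨hab, ?_⟩
      have hs : volume (Set.Ioc a b) ≤ volume ((Function.support fun x => 1 / p x) ∩ Set.Ioc a b) := by
        apply measure_mono_ae
        have := (ae_restrict_iff' measurableSet_Ioc).1 hp_pos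
        filter_upwards [this] with x hx hx2
        exact ⟨by simpa using (hx hx2).ne', hx2⟩
      refine lt_of_lt_of_le ?_ hs
      simp [hab]
    · rw [Set.uIoc_of_le hab']
      filter_upwards [hp_pos] with x hx
      simp [hx.le]
  have z0 : IntervalIntegrable (fun _ : ℝ => (0:ℝ)) volume a b := intervalIntegrable_const
  have hN2nn : 0 ≤ N2 := by
    have := hI z0 iN (by
      filter_upwards [hp_pos] with x hx
      have := normSq_nonneg (φ x)
      positivity)
    rwa [intervalIntegral.integral_zero] at this
  have hD2nn : 0 ≤ D2 := by
    have := hI z0 iD (by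
      filter_upwards [hp_pos] with x hx
      have := normSq_nonneg (u x)
      positivity)
    rwa [intervalIntegral.integral_zero] at this
  have hG2nn : 0 ≤ G2 := by
    have := hI z0 ipg (by
      filter_upwards [hp_pos] with x hx
      positivity)
    simpa using this
  -- max of φ
  obtain ⟨x0, hx0, hmax⟩ := isCompact_Icc.exists_isMaxOn (Set.nonempty_Icc.2 hab') nc
  have hmax' : ∀ x ∈ Set.Icc a b, normSq (φ x) ≤ normSq (φ x0) := fun x hx => hmax hx
  set M2 := normSq (φ x0) with hM2
  have hM2pos : 0 < M2 := by
    obtain ⟨x, hx, hne⟩ := hφne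
    exact lt_of_lt_of_le (normSq_pos.2 hne) (hmax' x hx)
  -- boundary form identity
  have E2 := (Au.mul hab' Aφ.conj).2 b ⟨hab', le_rfl⟩
  have E2' : u b * starRingEnd ℂ (φ b) = u a * starRingEnd ℂ (φ a) +
      ((Q : ℂ) - lam * W + D2) := by
    refine E2.trans ?_
    congr 1
    rw [hQ, hW, hD2, ← intervalIntegral.integral_ofReal, ← intervalIntegral.integral_ofReal,
      ← intervalIntegral.integral_ofReal, ← intervalIntegral.integral_const_mul,
      ← intervalIntegral.integral_sub (cI iQ) ((cI iW).const_mul _),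
      ← intervalIntegral.integral_add ((cI iQ).sub ((cI iW).const_mul _)) (cI iD)]
    apply intervalIntegral.integral_congr
    intro x _
    simp only [Complex.ofReal_mul, normSq_eq_conj_mul_self, map_div₀, Complex.conj_ofReal,
      Complex.ofReal_div, Complex.ofReal_one]
    ring
  have Ag3 := (Au.mul hab' (Ag.mul hab' Aφ.conj)).2 b ⟨hab', le_rfl⟩
  have iQg := mulc iQ gc
  have iWg := mulc iW gc
  have iDg := mulc iD gc
  have iT : IntervalIntegrable (fun t => (g' t : ℂ) * (u t * starRingEnd ℂ (φ t))) volume a b :=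
    mulcC (cI ig') (huc.mul (Aφ.conj.cont hab'))
  set Qg := ∫ t in a..b, q t * normSq (φ t) * g t with hQg
  set Wg := ∫ t in a..b, w t * normSq (φ t) * g t with hWg
  set Dg := ∫ t in a..b, 1 / p t * normSq (u t) * g t with hDg
  set T := ∫ t in a..b, (g' t : ℂ) * (u t * starRingEnd ℂ (φ t)) with hT
  have E3 : (0:ℂ) = (Qg : ℂ) - lam * Wg + Dg + T := by
    have e0 : (0:ℂ) = ∫ t in a..b, ((q t : ℂ) - lam * (w t : ℂ)) * φ t *
        ((g t : ℂ) * starRingEnd ℂ (φ t)) + u t * ((g' t : ℂ) * starRingEnd ℂ (φ t) +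
          (g t : ℂ) * starRingEnd ℂ (u t / (p t : ℂ))) := by
      simpa [hga, hgb] using Ag3
    rw [e0, hQg, hWg, hDg, hT, ← intervalIntegral.integral_ofReal,
      ← intervalIntegral.integral_ofReal,
      ← intervalIntegral.integral_ofReal, ← intervalIntegral.integral_const_mul,
      ← intervalIntegral.integral_sub (cI iQg) ((cI iWg).const_mul _),
      ← intervalIntegral.integral_add ((cI iQg).sub ((cI iWg).const_mul _)) (cI iDg),
      ← intervalIntegral.integral_add
        (((cI iQg).sub ((cI iWg).const_mul _)).add (cI iDg)) iT]
    apply intervalIntegral.integral_congr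
    intro x _
    simp only [Complex.ofReal_mul, normSq_eq_conj_mul_self, map_div₀, Complex.conj_ofReal,
      Complex.ofReal_div, Complex.ofReal_one]
    ring
  -- sup bound
  have S1 : ∀ y ∈ Set.Icc a b, M2 ≤ normSq (φ y) + 2 * (√N2 * √D2) := by
    intro y hy
    have hA := Aφ.mul hab' Aφ.conj
    set F : ℝ → ℂ := fun x => u x / (p x : ℂ) * starRingEnd ℂ (φ x) +
      φ x * starRingEnd ℂ (u x / (p x : ℂ)) with hF
    have iF : IntervalIntegrable F volume a b := hA.1
    have ha1 : φ x0 * starRingEnd ℂ (φ x0) = φ a * starRingEnd ℂ (φ a) + ∫ t in a..x0, F t :=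
      hA.2 x0 hx0
    have ha2 : φ y * starRingEnd ℂ (φ y) = φ a * starRingEnd ℂ (φ a) + ∫ t in a..y, F t :=
      hA.2 y hy
    have hsub : (∫ t in a..x0, F t) - ∫ t in a..y, F t = ∫ t in y..x0, F t := by
      apply intervalIntegral.integral_interval_sub_left
      · exact iF.mono_set (Set.uIcc_subset_uIcc_left (by rwa [huI]))
      · exact iF.mono_set (Set.uIcc_subset_uIcc_left (by rwa [huI]))
    have heq : ((M2 - normSq (φ y) : ℝ) : ℂ) = ∫ t in y..x0, F t := by
      rw [← hsub]
      push_cast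
      rw [hM2, ← Complex.mul_conj, ← Complex.mul_conj, ha1, ha2]; ring
    have h1 : M2 - normSq (φ y) ≤ ‖∫ t in y..x0, F t‖ := by
      rw [← heq, Complex.norm_real]; exact le_abs_self _
    have h2 : ‖∫ t in y..x0, F t‖ ≤ ∫ t in Set.uIoc y x0, ‖F t‖ :=
      intervalIntegral.norm_integral_le_integral_norm_uIoc
    have h3 : ∫ t in Set.uIoc y x0, ‖F t‖ ≤ ∫ t in a..b, ‖F t‖ := by
      rw [intervalIntegral.integral_of_le hab']
      refine setIntegral_mono_set iF.norm.1 (Filter.Eventually.of_forall fun x => norm_nonneg _) ?_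
      refine Filter.Eventually.of_forall ?_
      intro t ht
      have ht' : min y x0 < t ∧ t ≤ max y x0 := ht
      exact ⟨lt_of_le_of_lt (le_min hy.1 hx0.1) ht'.1, ht'.2.trans (max_le hy.2 hx0.2)⟩
    have iB : IntervalIntegrable (fun t => 1 / p t * (‖φ t‖ * ‖u t‖)) volume a b :=
      mulc ip (hφc.norm.mul huc.norm)
    have h4 := hI iF.norm (iB.const_mul 2) (by
      filter_upwards [hp_pos] with x hx
      have e1 : ‖u x / (p x : ℂ) * starRingEnd ℂ (φ x)‖ = 1 / p x * (‖φ x‖ * ‖u x‖) := by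
        simp [abs_of_pos hx]; ring
      have e2 : ‖φ x * starRingEnd ℂ (u x / (p x : ℂ))‖ = 1 / p x * (‖φ x‖ * ‖u x‖) := by
        simp [abs_of_pos hx]; ring
      refine (norm_add_le _ _).trans ?_
      rw [e1, e2]; linarith)
    rw [intervalIntegral.integral_const_mul] at h4
    have h5 := cs_lemma hab' iN iB iD (by
      filter_upwards [hp_pos] with x hx
      have n1 := normSq_nonneg (φ x)
      have n2 := normSq_nonneg (u x)
      refine ⟨by positivity, by positivity, le_of_eq ?_⟩
      rw [normSq_eq_norm_sq, normSq_eq_norm_sq]; ring)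
    have h6 := (le_abs_self _).trans (Real.abs_le_sqrt h5)
    rw [Real.sqrt_mul hN2nn] at h6
    linarith
  have S2 : M2 * P ≤ N2 + 2 * (√N2 * √D2) * P := by
    have := hI (ip.mul_const M2) (iN.add (ip.mul_const (2 * (√N2 * √D2)))) (by
      filter_upwards [hp_pos, hmem] with x hx hxm
      have h1 := S1 x hxm
      have h2 : 0 < 1 / p x := by positivity
      nlinarith)
    rw [intervalIntegral.integral_add iN (ip.mul_const _), intervalIntegral.integral_mul_const,
      intervalIntegral.integral_mul_const] at this
    linarith
  have hee : Complex.exp (θ * Complex.I) * starRingEnd ℂ (Complex.exp (θ * Complex.I)) = 1 := by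
    rw [Complex.mul_conj, normSq_eq_norm_sq, Complex.norm_exp_ofReal_mul_I]; simp
  have hW0 : W = 0 := by
    have h1 := bdry_im _ (φ a) (u a) r11 r12 r21 r22 hdet hee
    rw [← hbφ, ← hbu, E2'] at h1
    simp only [Complex.add_im, Complex.sub_im, Complex.ofReal_im, Complex.im_mul_ofReal] at h1
    have h2 : lam.im * W = 0 := by linarith
    exact (mul_eq_zero.1 h2).resolve_left hlam
  have hB : D2 + Q ≤ c * M2 := by
    have h1 := bdry_bound _ (φ a) (u a) r11 r12 r21 r22 c M2 hdet hee hc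
      (hmax' a ⟨le_rfl, hab'⟩) (by rw [← hbφ]; exact hmax' b ⟨hab', le_rfl⟩)
    rw [← hbφ, ← hbu, E2', hW0] at h1
    have h2 : u a * starRingEnd ℂ (φ a) + ((Q : ℂ) - lam * ((0:ℝ):ℂ) + D2)
        - u a * starRingEnd ℂ (φ a) = ((D2 + Q : ℝ) : ℂ) := by push_cast; ring
    rw [h2, Complex.norm_real] at h1
    exact (le_abs_self _).trans h1
  have hc0 : 0 ≤ c := by rw [hc]; split_ifs <;> positivity
  have hq0 : 0 ≤ ∫ t in a..b, |min (q t) 0| :=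
    intervalIntegral.integral_nonneg hab' fun x _ => abs_nonneg _
  have hα0 : 0 ≤ α := by rw [hα]; positivity
  have hDα : D2 ≤ α * M2 := by
    have iqm : IntervalIntegrable (fun t => |min (q t) 0|) volume a b := by
      refine iq.norm.mono_fun (by fun_prop) (Filter.Eventually.of_forall fun x => ?_)
      simp only [norm_eq_abs, abs_abs]
      rcases le_total (q x) 0 with h | h
      · simp [h]
      · simp [h]
    have := hI (iQ.neg) (iqm.mul_const M2) (by
      filter_upwards [hmem] with x hx
      have h1 := hmax' x hx
      have h2 := normSq_nonneg (φ x)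
      have h3 := neg_abs_le (min (q x) 0)
      have h4 := min_le_left (q x) 0
      have h5 := abs_nonneg (min (q x) 0)
      simp only [Pi.neg_apply]
      nlinarith [mul_le_mul_of_nonneg_left h1 h5, mul_le_mul_of_nonneg_right (h3.trans h4) h2])
    rw [intervalIntegral.integral_mul_const] at this
    have e : ∫ t in a..b, (-fun x => q x * normSq (φ x)) t = - Q := by
      simp [hQ]
    rw [e] at this
    rw [hα]; linarith
  -- normalisation-free bounds
  set N := √N2 with hN
  set D := √D2 with hD
  have hNN : N ^ 2 = N2 := Real.sq_sqrt hN2nn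
  have hDD : D ^ 2 = D2 := Real.sq_sqrt hD2nn
  have hN0 : 0 ≤ N := Real.sqrt_nonneg _
  have hD0 : 0 ≤ D := Real.sqrt_nonneg _
  have hNpos : 0 < N := by
    rcases hN0.lt_or_eq with h | h
    · exact h
    · exfalso
      rw [← hNN, ← h] at S2
      have := mul_pos hM2pos hPpos
      simp at S2
      linarith
  have S3 : M2 ≤ N ^ 2 * (1 / P) + 2 * N * D := by
    rw [← hNN] at S2
    have : N ^ 2 * (1 / P) + 2 * N * D = (N ^ 2 + 2 * (N * D) * P) / P := by
      field_simp
    rw [this, le_div_iff₀ hPpos]; exact S2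
  have hk : 0 < 1 / P := by positivity
  have hr0 : 0 ≤ α * (1 / P + α) := by positivity
  have hDβ : D ≤ β * N := by
    have h1 : (D - α * N) ^ 2 ≤ (α * (1 / P + α)) * N ^ 2 := by
      have h0 := mul_le_mul_of_nonneg_left S3 hα0
      have h9 : (D - α * N) ^ 2 = D ^ 2 - 2 * α * N * D + α ^ 2 * N ^ 2 := by ring
      rw [h9, hDD]
      linarith
    have h2 := Real.abs_le_sqrt h1
    rw [Real.sqrt_mul hr0, Real.sqrt_sq hN0] at h2
    have h3 := le_abs_self (D - α * N)
    rw [hβ]; linarith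
  have hβ0 : 0 ≤ β := by rw [hβ]; positivity
  have hγ2 : γ ^ 2 = 2 * β + 1 / P := by rw [hγ, Real.sq_sqrt (by positivity)]
  have hγ0 : 0 < γ := by rw [hγ]; positivity
  have hMγ : M2 ≤ (γ * N) ^ 2 := by
    rw [mul_pow, hγ2]
    have h0 := mul_le_mul_of_nonneg_left hDβ hN0
    linarith
  have hMs : √M2 ≤ γ * N := by
    rw [Real.sqrt_le_left (by positivity)]; exact hMγ
  -- lower bound on Wg
  have hWlow : ε / 2 * N ^ 2 ≤ Wg := by
    set S := {x | x ∈ Set.Icc a b ∧ p x * g x * w x < ε} with hSd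
    have hgm : Measurable (Set.indicator (Set.Icc a b) g) := by
      classical
      rw [← Set.piecewise_eq_indicator]
      exact gc.measurable_piecewise continuousOn_const measurableSet_Icc
    have hS : MeasurableSet S := by
      have e : S = Set.Icc a b ∩ {x | p x * Set.indicator (Set.Icc a b) g x * w x < ε} := by
        ext x
        constructor
        · rintro ⟨h1, h2⟩
          exact ⟨h1, by simpa [h1] using h2⟩
        · rintro ⟨h1, h2⟩
          refine ⟨h1, ?_⟩
          have h3 : p x * Set.indicator (Set.Icc a b) g x * w x < ε := h2
          rwa [Set.indicator_of_mem h1] at h3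
      rw [e]
      exact measurableSet_Icc.inter (measurableSet_lt ((hpm.mul hgm).mul hwm) measurable_const)
    have hwt := weight_lemma hab' hS hp_pos hp_int (by positivity) hεcond
    have iS : IntervalIntegrable (S.indicator fun x => 1 / p x) volume a b :=
      (intervalIntegrable_iff_integrableOn_Ioc_of_le hab').2 (hp_int.indicator hS)
    have h1 := hI ((iN.const_mul ε).sub (iS.const_mul (ε * M2))) iWg (by
      filter_upwards [hp_pos, hmem, hgw] with x hx hxm hgx
      have n1 := normSq_nonneg (φ x)
      have n2 := hmax' x hxm
      by_cases hxS : x ∈ S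
      · rw [Set.indicator_of_mem hxS]
        have h3 : 0 ≤ g x * w x * normSq (φ x) := by positivity
        have h4 : ε * (1 / p x) * normSq (φ x) ≤ ε * (1 / p x) * M2 := by gcongr
        linarith
      · rw [Set.indicator_of_notMem hxS]
        have h3 : ε ≤ p x * g x * w x := by
          by_contra hcon
          exact hxS ⟨hxm, not_le.1 hcon⟩
        have h4 : ε * (1 / p x) ≤ g x * w x := by
          rw [mul_one_div, div_le_iff₀ hx]; linarith
        have h5 := mul_le_mul_of_nonneg_right h4 n1
        linarith)
    rw [intervalIntegral.integral_sub (iN.const_mul ε) (iS.const_mul (ε * M2)),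
      intervalIntegral.integral_const_mul, intervalIntegral.integral_const_mul, ← hN2,
      ← hWg, ← hNN] at h1
    have h6 : ε * M2 * (∫ t in a..b, S.indicator (fun x => 1 / p x) t)
        ≤ ε * (γ * N) ^ 2 * (1 / (2 * γ ^ 2)) := by
      refine (mul_le_mul_of_nonneg_left hwt (by positivity)).trans ?_
      gcongr
    have h7 : ε * (γ * N) ^ 2 * (1 / (2 * γ ^ 2)) = ε / 2 * N ^ 2 := by
      field_simp
    linarith
  have hTb : ‖T‖ ≤ β * γ * √G2 * N ^ 2 := by
    have iB : IntervalIntegrable (fun t => |g' t| * ‖u t‖) volume a b := mulc ig'.abs huc.norm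
    have h1 : ‖T‖ ≤ ∫ t in a..b, ‖(g' t : ℂ) * (u t * starRingEnd ℂ (φ t))‖ :=
      intervalIntegral.norm_integral_le_integral_norm hab'
    have h2 := hI iT.norm (iB.mul_const (√M2)) (by
      filter_upwards [hmem] with x hxm
      have h3 : ‖φ x‖ ≤ √M2 := by
        apply Real.le_sqrt_of_sq_le
        rw [← normSq_eq_norm_sq]; exact hmax' x hxm
      simp only [norm_mul, Complex.norm_real, Real.norm_eq_abs, RCLike.norm_conj]
      rw [mul_assoc]
      gcongr)
    rw [intervalIntegral.integral_mul_const] at h2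
    have h5 := cs_lemma hab' ipg iB iD (by
      filter_upwards [hp_pos] with x hx
      have n2 := normSq_nonneg (u x)
      refine ⟨by positivity, by positivity, le_of_eq ?_⟩
      rw [normSq_eq_norm_sq, mul_pow, sq_abs]
      field_simp)
    have h6 := (le_abs_self _).trans (Real.abs_le_sqrt h5)
    rw [Real.sqrt_mul hG2nn] at h6
    have h7 : √G2 * √D2 * √M2 ≤ √G2 * (β * N) * (γ * N) := by
      gcongr
    have h8 := mul_le_mul_of_nonneg_right h6 (Real.sqrt_nonneg M2)
    calc ‖T‖ ≤ √G2 * (β * N) * (γ * N) := by linarith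
      _ = β * γ * √G2 * N ^ 2 := by ring
  have hgs : ∀ x ∈ Set.Icc a b, |g x| ≤ sSup ((fun x => |g x|) '' Set.Icc a b) := by
    intro x hx
    exact le_csSup (isCompact_Icc.image_of_continuousOn gc.abs).bddAbove ⟨x, hx, rfl⟩
  set gs := sSup ((fun x => |g x|) '' Set.Icc a b) with hgsd
  have hgs0 : 0 ≤ gs := (abs_nonneg _).trans (hgs a ⟨le_rfl, hab'⟩)
  have hDgb : |Dg| ≤ β ^ 2 * gs * N ^ 2 := by
    have h1 : |Dg| ≤ ∫ t in a..b, |1 / p t * normSq (u t) * g t| :=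
      intervalIntegral.abs_integral_le_integral_abs hab'
    have h2 := hI iDg.abs (iD.mul_const gs) (by
      filter_upwards [hp_pos, hmem] with x hx hxm
      have h3 := hgs x hxm
      have h4 := normSq_nonneg (u x)
      rw [abs_mul, abs_of_nonneg (by positivity : 0 ≤ 1 / p x * normSq (u x))]
      gcongr)
    rw [intervalIntegral.integral_mul_const, ← hD2] at h2
    have h5 : D2 ≤ β ^ 2 * N ^ 2 := by
      rw [← hDD, ← mul_pow]; gcongr
    have h6 := mul_le_mul_of_nonneg_right h5 hgs0
    linarith
  have hQgb : |Qg| ≤ γ ^ 2 * (∫ t in a..b, |q t|) * gs * N ^ 2 := by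
    have h1 : |Qg| ≤ ∫ t in a..b, |q t * normSq (φ t) * g t| :=
      intervalIntegral.abs_integral_le_integral_abs hab'
    have h2 := hI iQg.abs (iq.abs.mul_const ((γ * N) ^ 2 * gs)) (by
      filter_upwards [hmem] with x hxm
      have h3 := hgs x hxm
      have h4 := normSq_nonneg (φ x)
      rw [abs_mul, abs_mul, abs_of_nonneg h4, mul_assoc]
      have := (hmax' x hxm).trans hMγ
      gcongr)
    rw [intervalIntegral.integral_mul_const] at h2
    refine h1.trans (h2.trans (le_of_eq ?_))
    ring
  have eim : lam.im * Wg = T.im := by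
    have := congrArg Complex.im E3
    simp at this; linarith
  have ere : lam.re * Wg = Qg + Dg + T.re := by
    have := congrArg Complex.re E3
    simp at this; linarith
  have fin : ∀ s t : ℝ, |s| * Wg ≤ t * N ^ 2 → |s| ≤ 2 / ε * t := by
    intro s t h
    have h1 : |s| * (ε / 2 * N ^ 2) ≤ t * N ^ 2 :=
      (mul_le_mul_of_nonneg_left hWlow (abs_nonneg _)).trans h
    have h2 : |s| * (ε / 2) ≤ t := by
      refine le_of_mul_le_mul_right ?_ (by positivity : 0 < N ^ 2)
      linarith
    have h3 : |s| = 2 / ε * (|s| * (ε / 2)) := by field_simp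
    rw [h3]; gcongr
  have hWg0 : 0 ≤ Wg := le_trans (by positivity) hWlow
  constructor
  · have := fin lam.im (β * γ * √G2) (by
      rw [← abs_of_nonneg hWg0, ← abs_mul, eim]
      exact (Complex.abs_im_le_norm T).trans hTb)
    linarith
  · refine fin lam.re _ ?_
    rw [← abs_of_nonneg hWg0, ← abs_mul, ere]
    have h1 := abs_add_le (Qg + Dg) T.re
    have h2 := abs_add_le Qg Dg
    have h3 := Complex.abs_re_le_norm T
    linarith
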